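/- There exists a constant c_⋆ > 0 depending only on Q and ρ (one may take c_⋆ = (√Q/(1−ρ) + ρ/(2Q))^{1/2}) satisfying the following: for all 0 < δ < ρ/(2Q) there exist constants c_δ, n_δ > 0 such that if σ₀ ∈ 𝒮(δ) and σ_* ∈ 𝒮(σ₀, δ), then for all n ≥ n_δ the congestion dynamics started at σ_* satisfies P_{σ_*}( ⋃_{0 ≤ t ≤ n²} { σ(t) ∉ 𝒮(σ₀, c_⋆√δ) } ) ≤ e^{−c_δ n}. -/

import Mathlib

/-!
The load matrix diagonalizes the congestion dynamics. One step picks a uniform player and sends it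
to a uniformly chosen free slot (its own included), so a linear statistic
`f(τ) = ∑ j, c j * (1[τ j = v] - 1/Q)` has an explicit linear drift (`linStat_drift`). Two families
of coefficients give eigenfunctions (`linStat_eigen`), with `N = κ Q`:

* `c = 1`, the centred load `ξ_v - n/Q`, with gap `N / (n (1 + N - n))`;
* `c j = 1[σ₀ j = u] - ξ_u(σ₀)/n`, which sums to zero, with gap `(N - n) / (n (1 + N - n))`.

Both gaps are at least `1/(2n)` and one step changes either statistic by at most `1`. Iterating the
one-step exponential moment bound therefore gives, uniformly in time,
`E exp(θ f) ≤ exp(|θ| |f(σ_*)| + 2 n θ²)` for `|θ| ≤ 1` (`exp_moment`). Initially the statistics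
have size at most `δ n` and `2 δ ξ_u(σ₀)`, so exceeding `2 δ n` or `3 δ ξ_u(σ₀)` at a fixed time
has probability exponentially small in `n`, because `ξ_u(σ₀) ≥ n/(2Q)`. A union bound over the
`n² + 1` times and the `2 Q (Q + 1)` one-sided events (`hitProb_le`, `absorb`) finishes the
estimate. While no statistic exceeds its level, the centred entries of the normalized load matrix,
which are combinations of the two statistics, are at most `5 δ ≤ 5 √δ` (`near_of_level`).
-/

open scoped BigOperators
open Filter MeasureTheory

noncomputable section

namespace CongestionPaper

attribute [local instance 10] Classical.propDecidable

/-- Evolution of a distribution under a transition kernel `p` on a finite state space: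
`evolve p mu t` is the law at time `t` of the Markov chain with transition matrix `p`
and initial distribution `mu`. -/
def evolve {X : Type*} [Fintype X] (p : X -> X -> Real) (mu : X -> Real) : Nat -> X -> Real
  | 0 => mu
  | (t+1) => fun y => ∑ x, evolve p mu t x * p x y

/-- Point mass at `x0`. -/
def delta {X : Type*} (x0 : X) : X -> Real := fun x => if x = x0 then 1 else 0

/-- Total variation distance between two distributions on a finite type,
as the supremum over events `A` of the difference of probabilities of `A`. -/
def tvDist {X : Type*} [Fintype X] (mu nu : X -> Real) : Real :=
  ⨆ A : Finset X, |∑ x ∈ A, (mu x - nu x)|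

/-- Total variation distance between the pushforwards of `mu` and `nu` under `m`. -/
def tvDistOn {X : Type*} [Fintype X] {Y : Type*} (m : X -> Y) (mu nu : X -> Real) : Real :=
  ⨆ B : Finset Y, |∑ x : X, (if m x ∈ B then mu x - nu x else 0)|

/-- Worst-case (over the initial state) total variation distance to `pi` at time `t`. -/
def DTV {X : Type*} [Fintype X] (p : X -> X -> Real) (pi : X -> Real) (t : Nat) : Real :=
  ⨆ x0 : X, tvDist (evolve p (delta x0) t) pi

/-- Mixing time `T^mix(eps)`. -/
def Tmix {X : Type*} [Fintype X] (p : X -> X -> Real) (pi : X -> Real) (eps : Real) : Nat :=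
  sInf {t : Nat | DTV p pi t ≤ eps}

/-- Probability of a given trajectory `w` of length `T` for the chain started at `x0`. -/
def pathProb {X : Type*} [Fintype X] (p : X -> X -> Real) (x0 : X) (T : Nat)
    (w : Fin (T+1) -> X) : Real :=
  (if w 0 = x0 then 1 else 0) * ∏ t : Fin T, p (w t.castSucc) (w t.succ)

/-- Probability that some state visited up to time `T` satisfies `Bad`. -/
def hitProb {X : Type*} [Fintype X] (p : X -> X -> Real) (x0 : X) (T : Nat)
    (Bad : X -> Prop) : Real :=
  ∑ w : Fin (T+1) -> X, (if ∃ t, Bad (w t) then pathProb p x0 T w else 0)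

/-! ### The load profile chain -/

/-- Load profiles: `xi : S -> {0,...,kappa}` with `∑ xi v = n`, where `S = Fin Q`. -/
abbrev LoadState (Q kap n : Nat) := {xi : Fin Q -> Fin (kap+1) // (∑ v, ((xi v : Nat))) = n}

/-- Transition matrix of the load profile chain on `Xi_{n,S,kappa}`. -/
def loadP (Q kap n : Nat) (xi xi' : LoadState Q kap n) : Real :=
  if xi' = xi then
    (∑ v, ((xi.1 v : Nat) : Real) * (((1 + kap - (xi.1 v : Nat) : Nat)) : Real))
      / ((n : Real) * ((1 + kap * Q - n : Nat) : Real))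
  else
    (∑ vm, ∑ vp,
      if vm ≠ vp ∧ (xi'.1 vm : Nat) + 1 = (xi.1 vm : Nat) ∧ (xi'.1 vp : Nat) = (xi.1 vp : Nat) + 1 ∧
          (∀ v, v ≠ vm -> v ≠ vp -> xi'.1 v = xi.1 v)
        then ((xi.1 vm : Nat) : Real) * (((kap - (xi.1 vp : Nat) : Nat)) : Real) else 0)
      / ((n : Real) * ((1 + kap * Q - n : Nat) : Real))

/-- Stationary weight `∏_v 1/(xi_v! (kappa - xi_v)!)`. -/
def loadWeight (Q kap n : Nat) (xi : LoadState Q kap n) : Real :=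
  ∏ v, (1 : Real) /
    ((Nat.factorial (xi.1 v : Nat) : Real) * (Nat.factorial (kap - (xi.1 v : Nat)) : Real))

/-- The stationary distribution `pi_n` of the load profile chain. -/
def loadPi (Q kap n : Nat) (xi : LoadState Q kap n) : Real :=
  loadWeight Q kap n xi / (∑ eta : LoadState Q kap n, loadWeight Q kap n eta)

/-- `xi ∈ Xi(delta)`: the normalized load profile is within Euclidean distance `delta`
of the constant vector `(rho/Q)_v`. -/
def loadNear (Q kap n : Nat) (rho : Real) (xi : LoadState Q kap n) (del : Real) : Prop :=
  Real.sqrt (∑ v, (((xi.1 v : Nat) : Real) / ((kap * Q : Nat) : Real) - rho / (Q : Real))^2) ≤ del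

/-- `D(xi, xi') = (1/2) ∑_v |xi_v - xi'_v|`. -/
def loadD (Q kap n : Nat) (xi xi' : LoadState Q kap n) : Real :=
  (1/2) * ∑ v, |((xi.1 v : Nat) : Real) - ((xi'.1 v : Nat) : Real)|

/-! ### The congestion dynamics (Glauber dynamics) -/

/-- `xi_v(sigma)`: the number of players adopting resource `v`. -/
def xiCount {Q n : Nat} (sg : Fin n -> Fin Q) (v : Fin Q) : Nat :=
  (Finset.univ.filter fun i => sg i = v).card

/-- Configurations: `sigma : [n] -> S` with `xi_v(sigma) ≤ kappa` for every `v`. -/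
abbrev ConfigState (Q kap n : Nat) := {sg : Fin n -> Fin Q // ∀ v, xiCount sg v ≤ kap}

/-- Transition matrix of the congestion dynamics. -/
def configP (Q kap n : Nat) (sg sg' : ConfigState Q kap n) : Real :=
  if sg' = sg then
    (∑ i, ((1 + kap - xiCount sg.1 (sg.1 i) : Nat) : Real))
      / ((n : Real) * ((1 + kap * Q - n : Nat) : Real))
  else
    (∑ i, if sg'.1 i ≠ sg.1 i ∧ (∀ j, j ≠ i -> sg'.1 j = sg.1 j)
        then ((kap - xiCount sg.1 (sg'.1 i) : Nat) : Real) else 0)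
      / ((n : Real) * ((1 + kap * Q - n : Nat) : Real))

/-- The potential `F(sigma) = ∑_v ∑_{s=0}^{xi_v(sigma)} (log(kappa+1) - log(kappa+1-s))`. -/
def potF (Q kap n : Nat) (sg : ConfigState Q kap n) : Real :=
  ∑ v, ∑ s ∈ Finset.range (xiCount sg.1 v + 1),
    (Real.log ((kap : Real) + 1) - Real.log ((kap : Real) + 1 - (s : Real)))

/-- The Gibbs measure `mu_n(sigma) = e^{-F(sigma)}/Z_n`. -/
def gibbs (Q kap n : Nat) (sg : ConfigState Q kap n) : Real :=
  Real.exp (-(potF Q kap n sg)) / (∑ ta : ConfigState Q kap n, Real.exp (-(potF Q kap n ta)))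

/-- `sigma ∈ S(delta)`. -/
def configNear (Q kap n : Nat) (rho : Real) (sg : ConfigState Q kap n) (del : Real) : Prop :=
  Real.sqrt (∑ v, ((xiCount sg.1 v : Real) / ((kap * Q : Nat) : Real) - rho / (Q : Real))^2) ≤ del

/-- The load matrix `xi^{sigma0}_{u,v}(sigma)`. -/
def ximat {Q n : Nat} (sg0 sg : Fin n -> Fin Q) (u v : Fin Q) : Nat :=
  (Finset.univ.filter fun i => sg0 i = u ∧ sg i = v).card

/-- `sigma ∈ S(sigma0, delta)`: for each `u`, the normalized `u`-th row of the
load matrix is within Euclidean distance `delta` of the constant vector `(1/Q)_v`. -/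
def configNearMat (Q kap n : Nat) (sg0 sg : ConfigState Q kap n) (del : Real) : Prop :=
  ∀ u, Real.sqrt
      (∑ v, ((ximat sg0.1 sg.1 u v : Real) / (xiCount sg0.1 u : Real) - 1 / (Q : Real))^2) ≤ del

/-- `D^{sigma0}(sigma, sigma') = ∑_u (1/2) ∑_v |xi^{sigma0}_{u,v}(sigma) - xi^{sigma0}_{u,v}(sigma')|`. -/
def matD (Q kap n : Nat) (sg0 sg sg' : ConfigState Q kap n) : Real :=
  ∑ u, (1/2) * ∑ v, |(ximat sg0.1 sg.1 u v : Real) - (ximat sg0.1 sg'.1 u v : Real)|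

/-- The constant `cStar = (sqrt Q/(1-rho) + rho/(2Q))^{1/2}`. -/
def cStar (Q : Nat) (rho : Real) : Real :=
  Real.sqrt (Real.sqrt (Q : Real) / (1 - rho) + rho / (2 * (Q : Real)))

/-! ### The base-exchange chain on `B^(Q)(n)` -/

/-- `B^(Q)(n) = {x ∈ Z_{≥0}^Q : ∑ x_i = n}`. -/
abbrev BState (Q n : Nat) := {x : Fin Q -> Fin (n+1) // (∑ i, ((x i : Nat))) = n}

/-- Transition matrix of the base-exchange chain on `B^(Q)(n)`. -/
def baseP (Q n : Nat) (x y : BState Q n) : Real :=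
  if y = x then
    ∑ i, (if 0 < (x.1 i : Nat) then (1 : Real) / ((Q : Real) * (Q : Real)) else (1 : Real) / (Q : Real))
  else
    ∑ i, ∑ j,
      if i ≠ j ∧ (y.1 i : Nat) + 1 = (x.1 i : Nat) ∧ (y.1 j : Nat) = (x.1 j : Nat) + 1 ∧
          (∀ v, v ≠ i -> v ≠ j -> y.1 v = x.1 v)
        then (1 : Real) / ((Q : Real) * (Q : Real)) else 0

/-- The lazy version of the base-exchange chain. -/
def lazyBaseP (Q n : Nat) (x y : BState Q n) : Real :=
  (1/2) * (if y = x then 1 else 0) + (1/2) * baseP Q n x y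

/-- The uniform distribution on `B^(Q)(n)`. -/
def unifB (Q n : Nat) (x : BState Q n) : Real := 1 / (Fintype.card (BState Q n) : Real)


/-! ### Markov kernels on a finite space -/

/-- The Markov operator `(P g)(x) = ∑ y, p x y * g y`, as a linear endomorphism so that its powers
describe the chain at later times. -/
def markovOp {X : Type*} [Fintype X] (p : X → X → ℝ) : Module.End ℝ (X → ℝ) where
  toFun g x := ∑ y, p x y * g y
  map_add' g h := by
    funext x
    simp [mul_add, Finset.sum_add_distrib]
  map_smul' a g := by
    funext x
    simp only [Pi.smul_apply, smul_eq_mul, RingHom.id_apply, Finset.mul_sum]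
    exact Finset.sum_congr rfl fun y _ => by ring

lemma markovOp_apply {X : Type*} [Fintype X] (p : X → X → ℝ) (g : X → ℝ) (x : X) :
    markovOp p g x = ∑ y, p x y * g y := rfl

/-- Conditioning on the first step of the trajectory. -/
lemma sum_pathProb_succ {X : Type*} [Fintype X] (p : X → X → ℝ) (x0 : X) (T : ℕ)
    (g : (Fin (T + 2) → X) → ℝ) :
    ∑ w, pathProb p x0 (T + 1) w * g w
      = ∑ y, p x0 y * ∑ w, pathProb p y T w * g (Fin.cons x0 w) := by
  rw [← (Fin.consEquiv (fun _ => X)).sum_comp, Fintype.sum_prod_type]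
  have h1 : ∀ (x : X) (w : Fin (T + 1) → X),
      pathProb p x0 (T + 1) (Fin.cons x w : Fin (T + 2) → X)
        = (if x = x0 then 1 else 0) * (p x (w 0) * ∏ t : Fin T, p (w t.castSucc) (w t.succ)) := by
    intro x w
    unfold pathProb
    rw [Fin.prod_univ_succ]
    simp
  rw [Finset.sum_eq_single x0]
  · simp only [Finset.mul_sum]
    rw [Finset.sum_comm]
    refine Finset.sum_congr rfl fun w _ => ?_
    rw [Finset.sum_eq_single (w 0)]
    · have := h1 x0 w
      simp only [Fin.consEquiv, Equiv.coe_fn_mk]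
      rw [this]
      simp [pathProb]
      ring
    · intro y _ hy
      simp [pathProb, hy.symm]
    · simp
  · intro x _ hx
    refine Finset.sum_eq_zero fun w _ => ?_
    simp only [Fin.consEquiv, Equiv.coe_fn_mk]
    rw [h1]
    simp [hx]
  · simp

lemma sum_pathProb {X : Type*} [Fintype X] (p : X → X → ℝ) (hp1 : ∀ x, ∑ y, p x y = 1)
    (T : ℕ) (x0 : X) : ∑ w, pathProb p x0 T w = 1 := by
  induction T generalizing x0 with
  | zero =>
    rw [← (Equiv.funUnique (Fin 1) X).symm.sum_comp]
    simp [pathProb]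
  | succ T ih =>
    have := sum_pathProb_succ p x0 T (fun _ => 1)
    simpa [ih, hp1] using this

lemma pathProb_nonneg {X : Type*} [Fintype X] (p : X → X → ℝ) (hp0 : ∀ x y, 0 ≤ p x y)
    (x0 : X) (T : ℕ) (w : Fin (T + 1) → X) : 0 ≤ pathProb p x0 T w := by
  unfold pathProb
  exact mul_nonneg (by split_ifs <;> norm_num) (Finset.prod_nonneg fun _ _ => hp0 _ _)

/-- Union bound over time combined with Markov's inequality: `V` dominates the indicator of the
bad set, so the expectation of `V` at time `t` bounds the probability of being bad at time `t`. -/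
lemma hitProb_le {X : Type*} [Fintype X] (p : X → X → ℝ) (hp0 : ∀ x y, 0 ≤ p x y)
    (hp1 : ∀ x, ∑ y, p x y = 1) (Bad : X → Prop) (V : X → ℝ) (hV0 : ∀ x, 0 ≤ V x)
    (hV1 : ∀ x, Bad x → 1 ≤ V x) (T : ℕ) (x0 : X) :
    hitProb p x0 T Bad ≤ ∑ t ∈ Finset.range (T + 1), (markovOp p ^ t) V x0 := by
  induction T generalizing x0 with
  | zero =>
    unfold hitProb
    rw [← (Equiv.funUnique (Fin 1) X).symm.sum_comp, Finset.sum_eq_single x0]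
    · by_cases h : Bad x0
      · simp [pathProb, h, hV1]
      · simp [h, hV0]
    · intro y _ hy
      simp [pathProb, hy]
    · simp
  | succ T ih =>
    have h1 : hitProb p x0 (T + 1) Bad
        = ∑ w, pathProb p x0 (T + 1) w * (if ∃ t, Bad (w t) then 1 else 0) := by
      unfold hitProb
      exact Finset.sum_congr rfl fun w _ => by split_ifs <;> simp
    have hB : (if Bad x0 then (1 : ℝ) else 0) ≤ V x0 := by
      split_ifs with h
      · exact hV1 _ h
      · exact hV0 _
    rw [h1, sum_pathProb_succ, Finset.sum_range_succ']
    have h2 : ∀ y, ∑ w, pathProb p y T w *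
          (if ∃ t, Bad ((Fin.cons x0 w : Fin (T + 2) → X) t) then (1 : ℝ) else 0)
        ≤ V x0 + ∑ t ∈ Finset.range (T + 1), (markovOp p ^ t) V y := by
      intro y
      calc _ ≤ ∑ w, (pathProb p y T w * V x0
                + (if ∃ t, Bad (w t) then pathProb p y T w else 0)) := by
            refine Finset.sum_le_sum fun w _ => ?_
            have hw := pathProb_nonneg p hp0 y T w
            have hex : (∃ t, Bad ((Fin.cons x0 w : Fin (T + 2) → X) t))
                ↔ Bad x0 ∨ ∃ t, Bad (w t) := by
              rw [Fin.exists_fin_succ]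
              simp only [Fin.cons_zero, Fin.cons_succ]
            have h3 := mul_le_mul_of_nonneg_left hB hw
            have h4 := mul_nonneg hw (hV0 x0)
            by_cases ha : Bad x0
            · rw [if_pos (hex.2 (Or.inl ha))]
              rw [if_pos ha] at h3
              split_ifs <;> linarith
            · by_cases hb : ∃ t, Bad (w t)
              · rw [if_pos (hex.2 (Or.inr hb)), if_pos hb]
                linarith
              · rw [if_neg (fun h => (hex.1 h).elim ha hb), if_neg hb]
                linarith
        _ = V x0 + hitProb p y T Bad := by
            rw [Finset.sum_add_distrib, ← Finset.sum_mul, sum_pathProb p hp1, one_mul]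
            rfl
        _ ≤ _ := by linarith [ih y]
    calc _ ≤ ∑ y, p x0 y * (V x0 + ∑ t ∈ Finset.range (T + 1), (markovOp p ^ t) V y) :=
          Finset.sum_le_sum fun y _ => mul_le_mul_of_nonneg_left (h2 y) (hp0 _ _)
      _ = ∑ t ∈ Finset.range (T + 1), (markovOp p ^ (t + 1)) V x0 + V x0 := by
          simp only [mul_add, Finset.sum_add_distrib, ← Finset.sum_mul, hp1, one_mul,
            Finset.mul_sum, pow_succ', Module.End.mul_apply, markovOp_apply]
          rw [Finset.sum_comm, add_comm]
      _ = _ := by simp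

/-- One step of the exponential moment: the elementary bound `e^s ≤ 1 + s + s²` for `|s| ≤ 1`
replaces Hoeffding's lemma. -/
lemma exp_step {X : Type*} [Fintype X] (p : X → X → ℝ) (hp0 : ∀ x y, 0 ≤ p x y)
    (hp1 : ∀ x, ∑ y, p x y = 1) (f : X → ℝ) (r : ℝ)
    (hf : ∀ x, ∑ y, p x y * f y = r * f x)
    (hinc : ∀ x y, p x y ≠ 0 → |f y - f x| ≤ 1) (θ : ℝ) (hθ : |θ| ≤ 1) (x : X) :
    ∑ y, p x y * Real.exp (θ * f y) ≤ Real.exp (θ * r * f x + θ ^ 2) := by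
  have key : ∀ y, p x y * Real.exp (θ * f y)
      ≤ Real.exp (θ * f x) * (p x y * (1 + θ ^ 2 - θ * f x) + θ * (p x y * f y)) := by
    intro y
    by_cases h : p x y = 0
    · simp [h]
    have hi := hinc x y h
    have hs : |θ * (f y - f x)| ≤ 1 := by
      rw [abs_mul]
      exact mul_le_one₀ hθ (abs_nonneg _) hi
    have h1 := (abs_le.1 (Real.abs_exp_sub_one_sub_id_le hs)).2
    have h2 : (θ * (f y - f x)) ^ 2 ≤ θ ^ 2 := by
      rw [mul_pow]
      have : (f y - f x) ^ 2 ≤ 1 := by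
        rw [← sq_abs]
        exact pow_le_one₀ (abs_nonneg _) hi
      nlinarith [sq_nonneg θ]
    have h3 : Real.exp (θ * f y) = Real.exp (θ * f x) * Real.exp (θ * (f y - f x)) := by
      rw [← Real.exp_add]
      ring_nf
    rw [h3]
    have h4 : Real.exp (θ * (f y - f x)) ≤ 1 + θ ^ 2 - θ * f x + θ * f y := by nlinarith
    have := mul_le_mul_of_nonneg_left h4
      (mul_nonneg (Real.exp_pos (θ * f x)).le (hp0 x y))
    linarith
  calc _ ≤ ∑ y, Real.exp (θ * f x) * (p x y * (1 + θ ^ 2 - θ * f x) + θ * (p x y * f y)) :=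
        Finset.sum_le_sum fun y _ => key y
    _ = Real.exp (θ * f x) * ((θ * (r - 1) * f x + θ ^ 2) + 1) := by
        rw [← Finset.mul_sum, Finset.sum_add_distrib, ← Finset.sum_mul, ← Finset.mul_sum, hf, hp1]
        ring
    _ ≤ Real.exp (θ * f x) * Real.exp (θ * (r - 1) * f x + θ ^ 2) :=
        mul_le_mul_of_nonneg_left (Real.add_one_le_exp _) (Real.exp_pos _).le
    _ = _ := by
        rw [← Real.exp_add]
        ring_nf

/-- Exponential moments of an eigenfunction `f` with unit increments stay bounded uniformly in
time: the noise accumulated up to time `t` is a geometric series controlled by `K ≥ 1/(1-r)`. -/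
lemma exp_moment {X : Type*} [Fintype X] (p : X → X → ℝ) (hp0 : ∀ x y, 0 ≤ p x y)
    (hp1 : ∀ x, ∑ y, p x y = 1) (f : X → ℝ) (r : ℝ)
    (hf : ∀ x, ∑ y, p x y * f y = r * f x)
    (hinc : ∀ x y, p x y ≠ 0 → |f y - f x| ≤ 1) (hr0 : 0 ≤ r) (hr1 : r ≤ 1)
    (K : ℝ) (hK0 : 0 ≤ K) (hK : 1 ≤ (1 - r) * K) (θ : ℝ) (hθ : |θ| ≤ 1) (t : ℕ) (x : X) :
    (markovOp p ^ t) (fun y => Real.exp (θ * f y)) x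
      ≤ Real.exp (|θ| * |f x| + θ ^ 2 * K) := by
  have main : ∀ x, (markovOp p ^ t) (fun y => Real.exp (θ * f y)) x
      ≤ Real.exp (θ * r ^ t * f x + θ ^ 2 * ((1 - r ^ t) * K)) := by
    induction t with
    | zero => intro x; simp
    | succ t ih =>
      intro x
      have hrt0 : 0 ≤ r ^ t := pow_nonneg hr0 t
      have hrt1 : r ^ t ≤ 1 := pow_le_one₀ hr0 hr1
      rw [pow_succ', Module.End.mul_apply, markovOp_apply]
      have hθ' : |θ * r ^ t| ≤ 1 := by
        rw [abs_mul, abs_of_nonneg hrt0]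
        exact mul_le_one₀ hθ hrt0 hrt1
      calc _ ≤ ∑ y, p x y * Real.exp (θ * r ^ t * f y + θ ^ 2 * ((1 - r ^ t) * K)) :=
            Finset.sum_le_sum fun y _ => mul_le_mul_of_nonneg_left (ih y) (hp0 _ _)
        _ = Real.exp (θ ^ 2 * ((1 - r ^ t) * K)) * ∑ y, p x y * Real.exp (θ * r ^ t * f y) := by
            rw [Finset.mul_sum]
            refine Finset.sum_congr rfl fun y _ => ?_
            rw [Real.exp_add]
            ring
        _ ≤ Real.exp (θ ^ 2 * ((1 - r ^ t) * K))
              * Real.exp (θ * r ^ t * r * f x + (θ * r ^ t) ^ 2) :=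
            mul_le_mul_of_nonneg_left (exp_step p hp0 hp1 f r hf hinc _ hθ' x) (Real.exp_pos _).le
        _ ≤ _ := by
            rw [← Real.exp_add]
            apply Real.exp_le_exp.2
            have h1 : r ^ t * r ^ t ≤ r ^ t * ((1 - r) * K) :=
              mul_le_mul_of_nonneg_left (hrt1.trans hK) hrt0
            have h2 := mul_le_mul_of_nonneg_left h1 (sq_nonneg θ)
            rw [pow_succ r t]
            nlinarith
  refine (main x).trans (Real.exp_le_exp.2 (add_le_add ?_ ?_))
  · have hrt0 : 0 ≤ r ^ t := pow_nonneg hr0 t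
    have hrt1 : r ^ t ≤ 1 := pow_le_one₀ hr0 hr1
    calc _ ≤ |θ * r ^ t * f x| := le_abs_self _
      _ = |θ| * |f x| * r ^ t := by rw [abs_mul, abs_mul, abs_of_nonneg hrt0]; ring
      _ ≤ _ := mul_le_of_le_one_right (by positivity) hrt1
  · have hrt0 : 0 ≤ r ^ t := pow_nonneg hr0 t
    refine mul_le_mul_of_nonneg_left ?_ (sq_nonneg θ)
    nlinarith

/-! ### The congestion kernel acting on observables -/

lemma xiCount_update_le {Q kap n : ℕ} (sg : ConfigState Q kap n) (i : Fin n) (τ : Fin n → Fin Q)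
    (hτ : ∀ j, j ≠ i → τ j = sg.1 j) (hlt : xiCount sg.1 (τ i) < kap) (v : Fin Q) :
    xiCount τ v ≤ kap := by
  unfold xiCount at *
  by_cases hv : v = τ i
  · subst hv
    have hsub : (Finset.univ.filter fun j => τ j = τ i)
        ⊆ insert i (Finset.univ.filter fun j => sg.1 j = τ i) := by
      intro j hj
      simp only [Finset.mem_filter, Finset.mem_univ, true_and, Finset.mem_insert] at hj ⊢
      by_cases hji : j = i
      · exact Or.inl hji
      · exact Or.inr (by rw [← hτ j hji, hj])
    have h1 := Finset.card_le_card hsub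
    have h2 := Finset.card_insert_le i (Finset.univ.filter fun j => sg.1 j = τ i)
    omega
  · refine le_trans (Finset.card_le_card ?_) (sg.2 v)
    intro j hj
    simp only [Finset.mem_filter, Finset.mem_univ, true_and] at hj ⊢
    by_cases hji : j = i
    · subst hji
      exact absurd hj.symm hv
    · rw [← hτ j hji, hj]

/-- Contribution of player `i` to the off-diagonal part of the kernel. Moves to a full resource
leave the state space, and their weight `kap - ξ_v` vanishes, so the sum may run over all `v`. -/
lemma offdiag_sum {Q kap n : ℕ} (sg : ConfigState Q kap n) (i : Fin n)
    (G : (Fin n → Fin Q) → ℝ) :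
    ∑ sg' : ConfigState Q kap n,
      (if sg'.1 i ≠ sg.1 i ∧ (∀ j, j ≠ i -> sg'.1 j = sg.1 j)
        then ((kap - xiCount sg.1 (sg'.1 i) : Nat) : Real) else 0) * G sg'.1
      = ∑ v, if v ≠ sg.1 i then ((kap : ℝ) - xiCount sg.1 v) * G (Function.update sg.1 i v)
          else 0 := by
  set h : (Fin n → Fin Q) → ℝ := fun τ =>
    (if τ i ≠ sg.1 i ∧ (∀ j, j ≠ i -> τ j = sg.1 j)
        then ((kap - xiCount sg.1 (τ i) : Nat) : Real) else 0) * G τ with hh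
  have h1 : ∑ sg' : ConfigState Q kap n, h sg'.1 = ∑ τ, h τ := by
    refine Finset.sum_of_injOn (fun sg' : ConfigState Q kap n => sg'.1)
      (fun a _ b _ hab => Subtype.ext hab) (by simp [Set.MapsTo]) ?_ (fun _ _ => rfl)
    intro τ _ hτ
    simp only [hh]
    split_ifs with hc
    · by_cases hlt : xiCount sg.1 (τ i) < kap
      · exact absurd ⟨⟨τ, xiCount_update_le sg i τ hc.2 hlt⟩, by simp, rfl⟩ hτ
      · rw [Nat.sub_eq_zero_of_le (not_lt.1 hlt)]
        simp
    · simp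
  rw [show (∑ sg' : ConfigState Q kap n,
      (if sg'.1 i ≠ sg.1 i ∧ (∀ j, j ≠ i -> sg'.1 j = sg.1 j)
        then ((kap - xiCount sg.1 (sg'.1 i) : Nat) : Real) else 0) * G sg'.1)
      = ∑ sg' : ConfigState Q kap n, h sg'.1 from rfl, h1]
  symm
  refine Finset.sum_of_injOn (fun v => Function.update sg.1 i v)
    (fun a _ b _ hab => by simpa using congrFun hab i) (by simp [Set.MapsTo]) ?_ ?_
  · intro τ _ hτ
    simp only [hh]
    rw [if_neg, zero_mul]
    rintro ⟨_, hc⟩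
    refine hτ ⟨τ i, by simp, ?_⟩
    funext j
    by_cases hji : j = i
    · subst hji; simp
    · simp [hji, hc j hji]
  · intro v _
    have hu : ∀ j, j ≠ i → Function.update sg.1 i v j = sg.1 j :=
      fun j hj => Function.update_of_ne hj _ _
    have hs := sg.2 v
    simp only [hh]
    by_cases hv : v = sg.1 i
    · simp [hv]
    · rw [if_pos hv, if_pos ⟨by simpa using hv, hu⟩]
      simp [Nat.cast_sub hs]

/-- The kernel as "pick a uniform player `i`, then send it to a uniformly chosen free slot", its
own slot counting as free. -/
lemma configP_sum {Q kap n : ℕ} (sg : ConfigState Q kap n) (G : (Fin n → Fin Q) → ℝ) :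
    ∑ sg', configP Q kap n sg sg' * G sg'.1
      = (∑ i, ∑ v, ((kap : ℝ) - xiCount sg.1 v + if sg.1 i = v then 1 else 0)
          * G (Function.update sg.1 i v)) / ((n : ℝ) * ((1 + kap * Q - n : ℕ) : ℝ)) := by
  have hP : ∀ sg', configP Q kap n sg sg' * G sg'.1 =
      ((if sg' = sg then (∑ i, ((1 + kap - xiCount sg.1 (sg.1 i) : Nat) : Real)) * G sg.1 else 0)
        + ∑ i, (if sg'.1 i ≠ sg.1 i ∧ (∀ j, j ≠ i -> sg'.1 j = sg.1 j)
        then ((kap - xiCount sg.1 (sg'.1 i) : Nat) : Real) else 0) * G sg'.1)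
          / ((n : ℝ) * ((1 + kap * Q - n : ℕ) : ℝ)) := by
    intro sg'
    unfold configP
    by_cases hs : sg' = sg
    · subst hs
      simp
      ring
    · rw [if_neg hs, if_neg hs, zero_add, ← Finset.sum_mul]
      ring
  rw [Finset.sum_congr rfl fun sg' _ => hP sg', ← Finset.sum_div, Finset.sum_add_distrib,
    Finset.sum_comm]
  congr 1
  rw [Finset.sum_congr rfl fun i _ => offdiag_sum sg i G, Finset.sum_ite_eq' Finset.univ sg,
    if_pos (Finset.mem_univ _), Finset.sum_mul, ← Finset.sum_add_distrib]
  refine Finset.sum_congr rfl fun i _ => ?_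
  have h1 : ((1 + kap - xiCount sg.1 (sg.1 i) : Nat) : Real) * G sg.1
      = ∑ v, if v = sg.1 i then
          ((kap : ℝ) - xiCount sg.1 v + 1) * G (Function.update sg.1 i v) else 0 := by
    rw [Finset.sum_ite_eq' Finset.univ (sg.1 i)]
    have := sg.2 (sg.1 i)
    rw [Nat.cast_sub (by omega)]
    simp
    left
    ring
  rw [h1, ← Finset.sum_add_distrib]
  refine Finset.sum_congr rfl fun v _ => ?_
  by_cases hv : v = sg.1 i
  · simp [hv]
  · simp [hv, Ne.symm hv]

lemma configP_nonneg {Q kap n : ℕ} (sg sg' : ConfigState Q kap n) :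
    0 ≤ configP Q kap n sg sg' := by
  unfold configP
  split_ifs
  · positivity
  · refine div_nonneg (Finset.sum_nonneg fun i _ => ?_) (by positivity)
    split_ifs <;> positivity

lemma sum_xiCount {Q n : ℕ} (sg : Fin n → Fin Q) : ∑ v, (xiCount sg v : ℝ) = n := by
  have : ∑ v, xiCount sg v = n := by
    unfold xiCount
    rw [← Finset.card_eq_sum_card_fiberwise (fun _ _ => Finset.mem_univ _)]
    simp
  exact_mod_cast this

lemma sum_indicator {Q n : ℕ} (sg : Fin n → Fin Q) (v : Fin Q) :
    ∑ i, (if sg i = v then (1 : ℝ) else 0) = xiCount sg v := by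
  simp [xiCount]

lemma configP_row {Q kap n : ℕ} (hn : 0 < n) (hnN : n < kap * Q) (sg : ConfigState Q kap n) :
    ∑ sg', configP Q kap n sg sg' = 1 := by
  have h := configP_sum sg (fun _ => 1)
  simp only [mul_one] at h
  have hn' : (0 : ℝ) < n := by exact_mod_cast hn
  have hN' : (n : ℝ) < kap * Q := by exact_mod_cast hnN
  have hD : ((1 + kap * Q - n : ℕ) : ℝ) = 1 + kap * Q - n := by
    rw [Nat.cast_sub (by omega)]
    push_cast
    ring
  rw [h, hD]
  simp only [Finset.sum_add_distrib, Finset.sum_sub_distrib, sum_xiCount]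
  simp only [Finset.sum_const, Finset.card_univ, Fintype.card_fin, nsmul_eq_mul,
    Finset.sum_ite_eq, Finset.mem_univ, if_true]
  have : (1 + (kap : ℝ) * Q - n) ≠ 0 := by linarith
  rw [div_eq_one_iff_eq (mul_ne_zero hn'.ne' this)]
  ring

/-! ### Linear statistics -/

/-- The centred linear statistic `∑ j, c j * (1[τ j = v] - 1/Q)`. -/
def linStat {Q n : ℕ} (c : Fin n → ℝ) (v : Fin Q) (τ : Fin n → Fin Q) : ℝ :=
  ∑ j, c j * ((if τ j = v then 1 else 0) - 1 / (Q : ℝ))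

lemma linStat_update {Q n : ℕ} (c : Fin n → ℝ) (v : Fin Q) (τ : Fin n → Fin Q) (i : Fin n)
    (w : Fin Q) : linStat c v (Function.update τ i w)
      = linStat c v τ + c i * ((if w = v then 1 else 0) - (if τ i = v then 1 else 0)) := by
  unfold linStat
  rw [← Finset.add_sum_erase _ _ (Finset.mem_univ i),
    ← Finset.add_sum_erase (a := i) (f := fun j => c j * ((if τ j = v then 1 else 0) - 1 / (Q : ℝ)))
      _ (Finset.mem_univ i)]
  rw [Finset.sum_congr rfl (g := fun j => c j * ((if τ j = v then 1 else 0) - 1 / (Q : ℝ)))]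
  · simp only [Function.update_self]
    ring
  · intro j hj
    rw [Function.update_of_ne (Finset.ne_of_mem_erase hj)]

lemma linStat_inc {Q kap n : ℕ} (c : Fin n → ℝ) (hc : ∀ i, |c i| ≤ 1) (v : Fin Q)
    (sg sg' : ConfigState Q kap n) (h : configP Q kap n sg sg' ≠ 0) :
    |linStat c v sg'.1 - linStat c v sg.1| ≤ 1 := by
  by_cases hs : sg' = sg
  · simp [hs]
  obtain ⟨i, hi⟩ : ∃ i, ∀ j, j ≠ i → sg'.1 j = sg.1 j := by
    by_contra! hcon
    apply h
    unfold configP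
    rw [if_neg hs, Finset.sum_eq_zero, zero_div]
    intro i _
    rw [if_neg]
    rintro ⟨_, hh⟩
    obtain ⟨j, hj, hne⟩ := hcon i
    exact hne (hh j hj)
  have hu : sg'.1 = Function.update sg.1 i (sg'.1 i) := by
    funext j
    by_cases hji : j = i
    · subst hji; simp
    · simp [hji, hi j hji]
  rw [hu, linStat_update, add_sub_cancel_left, abs_mul]
  refine mul_le_one₀ (hc i) (abs_nonneg _) ?_
  split_ifs <;> norm_num

/-- The drift of a linear statistic. -/
lemma linStat_drift {Q kap n : ℕ} (hQ : 0 < Q) (hn : 0 < n) (hnN : n < kap * Q)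
    (c : Fin n → ℝ) (v : Fin Q) (sg : ConfigState Q kap n) :
    ∑ sg', configP Q kap n sg sg' * linStat c v sg'.1
      = linStat c v sg.1
        + ((∑ i, c i) * ((n : ℝ) / Q - xiCount sg.1 v) - ((kap : ℝ) * Q - n) * linStat c v sg.1)
          / ((n : ℝ) * (1 + kap * Q - n)) := by
  have hn' : (0 : ℝ) < n := by exact_mod_cast hn
  have hQ' : (0 : ℝ) < Q := by exact_mod_cast hQ
  have hN' : (n : ℝ) < kap * Q := by exact_mod_cast hnN
  have hD : ((1 + kap * Q - n : ℕ) : ℝ) = 1 + kap * Q - n := by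
    rw [Nat.cast_sub (by omega)]
    push_cast
    ring
  have hDn : (1 + (kap : ℝ) * Q - n) ≠ 0 := by linarith
  have hinner : ∀ i, ∑ w, ((kap : ℝ) - xiCount sg.1 w + if sg.1 i = w then 1 else 0)
          * linStat c v (Function.update sg.1 i w)
      = (1 + kap * Q - n) * linStat c v sg.1
        + (c i * (kap - xiCount sg.1 v - (kap * Q - n) / Q)
          - (kap * Q - n) * (c i * ((if sg.1 i = v then 1 else 0) - 1 / (Q : ℝ)))) := by
    intro i
    set a : ℝ := if sg.1 i = v then 1 else 0 with ha
    have e1 : ∑ w, ((kap : ℝ) - xiCount sg.1 w + if sg.1 i = w then 1 else 0)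
        = 1 + kap * Q - n := by
      simp only [Finset.sum_add_distrib, Finset.sum_sub_distrib, sum_xiCount]
      simp
      ring
    have e2 : ∑ w, ((kap : ℝ) - xiCount sg.1 w + if sg.1 i = w then 1 else 0)
          * (if w = v then (1 : ℝ) else 0) = kap - xiCount sg.1 v + a := by
      simp [ha]
    calc _ = ∑ w, (((kap : ℝ) - xiCount sg.1 w + if sg.1 i = w then 1 else 0)
            * (linStat c v sg.1 - c i * a)
          + c i * (((kap : ℝ) - xiCount sg.1 w + if sg.1 i = w then 1 else 0)
            * (if w = v then (1 : ℝ) else 0))) := by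
          refine Finset.sum_congr rfl fun w _ => ?_
          rw [linStat_update]
          ring
      _ = _ := by
          rw [Finset.sum_add_distrib, ← Finset.sum_mul, ← Finset.mul_sum, e1, e2]
          field_simp
          ring
  have hsum : ∑ i, ((1 + kap * Q - n) * linStat c v sg.1
        + (c i * (kap - xiCount sg.1 v - (kap * Q - n) / Q)
          - (kap * Q - n) * (c i * ((if sg.1 i = v then 1 else 0) - 1 / (Q : ℝ)))))
      = n * ((1 + kap * Q - n) * linStat c v sg.1)
        + ((∑ i, c i) * (kap - xiCount sg.1 v - (kap * Q - n) / Q)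
          - (kap * Q - n) * linStat c v sg.1) := by
    rw [Finset.sum_add_distrib, Finset.sum_sub_distrib, Finset.sum_mul, linStat, ← Finset.mul_sum]
    simp only [Finset.sum_const, Finset.card_univ, Fintype.card_fin, nsmul_eq_mul]
    rw [Finset.mul_sum _ _ ((kap : ℝ) * Q - n)]
    ring
  rw [configP_sum sg (linStat c v), hD, Finset.sum_congr rfl fun i _ => hinner i, hsum]
  field_simp
  ring

/-! ### The eigenfunctions attached to a reference configuration -/

/-- Coefficients of the eigenfunctions. For `none` the statistic `linStat` is the centred load
`ξ_v - n/Q`; for `some u` it is the part of the centred entry `(u, v)` of the load matrix that is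
left after subtracting the share `ξ_u(σ₀)/n` of the centred load. -/
def coef {Q n : ℕ} (s0 : Fin n → Fin Q) : Option (Fin Q) → Fin n → ℝ
  | none => fun _ => 1
  | some u => fun j => (if s0 j = u then 1 else 0) - (xiCount s0 u : ℝ) / n

lemma xiCount_le {Q n : ℕ} (s0 : Fin n → Fin Q) (u : Fin Q) : xiCount s0 u ≤ n := by
  simpa [xiCount] using Finset.card_le_univ (Finset.univ.filter fun i => s0 i = u)

lemma coef_abs_le {Q n : ℕ} (hn : 0 < n) (s0 : Fin n → Fin Q) (o : Option (Fin Q)) (i : Fin n) :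
    |coef s0 o i| ≤ 1 := by
  have hn' : (0 : ℝ) < n := by exact_mod_cast hn
  cases o with
  | none => simp [coef]
  | some u =>
    have h1 : (xiCount s0 u : ℝ) / n ≤ 1 := by
      rw [div_le_one hn']
      exact_mod_cast xiCount_le s0 u
    have h0 : 0 ≤ (xiCount s0 u : ℝ) / n := by positivity
    simp only [coef]
    rw [abs_le]
    split_ifs <;> constructor <;> linarith

lemma linStat_none {Q n : ℕ} (s0 τ : Fin n → Fin Q) (v : Fin Q) :
    linStat (coef s0 none) v τ = xiCount τ v - (n : ℝ) / Q := by
  simp only [linStat, coef, one_mul, Finset.sum_sub_distrib, sum_indicator]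
  simp [div_eq_mul_inv]

lemma linStat_some {Q n : ℕ} (s0 τ : Fin n → Fin Q) (u v : Fin Q) :
    linStat (coef s0 (some u)) v τ = ((ximat s0 τ u v : ℝ) - (xiCount s0 u : ℝ) / Q)
      - (xiCount s0 u : ℝ) / n * (xiCount τ v - (n : ℝ) / Q) := by
  have h1 : ∑ j, (if s0 j = u then (1 : ℝ) else 0) * (if τ j = v then (1 : ℝ) else 0)
      = ximat s0 τ u v := by
    simp [ximat, ← ite_and, and_comm]
  rw [← h1, ← linStat_none s0, ← sum_indicator s0 u]
  simp only [linStat, coef, one_mul]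
  rw [Finset.sum_div, ← Finset.sum_sub_distrib, Finset.mul_sum, ← Finset.sum_sub_distrib]
  refine Finset.sum_congr rfl fun j _ => ?_
  rw [sum_indicator]
  ring

lemma sum_ximat {Q n : ℕ} (s0 τ : Fin n → Fin Q) (v : Fin Q) :
    ∑ u, (ximat s0 τ u v : ℝ) = xiCount τ v := by
  have h := Finset.card_eq_sum_card_fiberwise (s := Finset.univ.filter fun i => τ i = v)
    (f := s0) (t := Finset.univ) (fun _ _ => Finset.mem_univ _)
  unfold xiCount
  rw [h, Nat.cast_sum]
  refine Finset.sum_congr rfl fun u _ => ?_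
  rw [ximat, Finset.filter_filter]
  congr 2
  ext i
  simp [and_comm]

/-- Each statistic is an eigenfunction, with spectral gap at least `1/(2n)`. -/
lemma linStat_eigen {Q kap n : ℕ} (hQ : 0 < Q) (hn : 0 < n) (hnN : n < kap * Q)
    (s0 : Fin n → Fin Q) (o : Option (Fin Q)) :
    ∃ r : ℝ, 0 ≤ r ∧ r ≤ 1 ∧ 1 ≤ (1 - r) * (2 * n) ∧ ∀ v, ∀ sg : ConfigState Q kap n,
      ∑ sg', configP Q kap n sg sg' * linStat (coef s0 o) v sg'.1
        = r * linStat (coef s0 o) v sg.1 := by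
  have hn' : (1 : ℝ) ≤ n := by exact_mod_cast hn
  have hN' : (n : ℝ) + 1 ≤ kap * Q := by exact_mod_cast hnN
  set N : ℝ := kap * Q with hNdef
  have hD : 0 < (n : ℝ) * (1 + N - n) := mul_pos (by linarith) (by linarith)
  cases o with
  | none =>
    refine ⟨1 - N / (n * (1 + N - n)), ?_, ?_, ?_, ?_⟩
    · rw [sub_nonneg, div_le_one hD]
      nlinarith
    · have : 0 ≤ N / (n * (1 + N - n)) := div_nonneg (by linarith) hD.le
      linarith
    · rw [sub_sub_cancel, div_mul_eq_mul_div, le_div_iff₀ hD]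
      nlinarith
    · intro v sg
      rw [linStat_drift hQ hn hnN, ← hNdef, linStat_none]
      simp only [coef, Finset.sum_const, Finset.card_univ, Fintype.card_fin, nsmul_eq_mul, mul_one]
      ring
  | some u =>
    have hC : ∑ i, coef s0 (some u) i = 0 := by
      simp only [coef, Finset.sum_sub_distrib, sum_indicator]
      simp
      field_simp
      simp
    refine ⟨1 - (N - n) / (n * (1 + N - n)), ?_, ?_, ?_, ?_⟩
    · rw [sub_nonneg, div_le_one hD]
      nlinarith
    · have : 0 ≤ (N - n) / (n * (1 + N - n)) := div_nonneg (by linarith) hD.le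
      linarith
    · rw [sub_sub_cancel, div_mul_eq_mul_div, le_div_iff₀ hD]
      nlinarith
    · intro v sg
      rw [linStat_drift hQ hn hnN, ← hNdef, hC]
      ring

/-- Size allowed for each statistic along the trajectory. -/
def level {Q n : ℕ} (s0 : Fin n → Fin Q) (del : ℝ) : Option (Fin Q) → ℝ
  | none => 2 * (del * n)
  | some u => 3 * (del * xiCount s0 u)

/-- The initial size of each statistic is below its allowed level by `del * n / (2 * Q)`. -/
lemma initial_le {Q kap n : ℕ} (hQ : 2 ≤ Q) (hn : 0 < n) (del : ℝ) (hdel : 0 < del)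
    (sg0 sgs : ConfigState Q kap n) (hm : ∀ u, (n : ℝ) / (2 * Q) ≤ xiCount sg0.1 u)
    (h : configNearMat Q kap n sg0 sgs del) (o : Option (Fin Q)) (v : Fin Q) :
    |linStat (coef sg0.1 o) v sgs.1| ≤ level sg0.1 del o - del * (n / (2 * Q)) := by
  have hn' : (0 : ℝ) < n := by exact_mod_cast hn
  have hQ' : (2 : ℝ) ≤ Q := by exact_mod_cast hQ
  have hm0 : ∀ u, (0 : ℝ) < xiCount sg0.1 u := fun u =>
    lt_of_lt_of_le (by positivity) (hm u)
  have hZ : ∀ u, |(ximat sg0.1 sgs.1 u v : ℝ) - (xiCount sg0.1 u : ℝ) / Q|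
      ≤ del * xiCount sg0.1 u := by
    intro u
    have h1 : |(ximat sg0.1 sgs.1 u v : ℝ) / (xiCount sg0.1 u : ℝ) - 1 / (Q : ℝ)| ≤ del := by
      refine le_trans ?_ (h u)
      rw [← Real.sqrt_sq_eq_abs]
      exact Real.sqrt_le_sqrt (Finset.single_le_sum
        (f := fun v => ((ximat sg0.1 sgs.1 u v : ℝ) / (xiCount sg0.1 u : ℝ) - 1 / (Q : ℝ)) ^ 2)
        (fun _ _ => sq_nonneg _) (Finset.mem_univ v))
    have h2 : (ximat sg0.1 sgs.1 u v : ℝ) - (xiCount sg0.1 u : ℝ) / Q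
        = ((ximat sg0.1 sgs.1 u v : ℝ) / (xiCount sg0.1 u : ℝ) - 1 / (Q : ℝ))
          * xiCount sg0.1 u := by
      have := (hm0 u).ne'
      field_simp
    rw [h2, abs_mul, abs_of_pos (hm0 u)]
    exact mul_le_mul_of_nonneg_right h1 (hm0 u).le
  have hY : |(xiCount sgs.1 v : ℝ) - (n : ℝ) / Q| ≤ del * n := by
    have e : (xiCount sgs.1 v : ℝ) - (n : ℝ) / Q
        = ∑ u, ((ximat sg0.1 sgs.1 u v : ℝ) - (xiCount sg0.1 u : ℝ) / Q) := by
      rw [Finset.sum_sub_distrib, sum_ximat, ← Finset.sum_div, sum_xiCount]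
    rw [e, ← sum_xiCount sg0.1, Finset.mul_sum]
    exact (Finset.abs_sum_le_sum_abs _ _).trans (Finset.sum_le_sum fun u _ => hZ u)
  cases o with
  | none =>
    rw [linStat_none, level]
    have : (n : ℝ) / (2 * Q) ≤ n := div_le_self hn'.le (by linarith)
    nlinarith
  | some u =>
    rw [linStat_some, level]
    have h3 : |(xiCount sg0.1 u : ℝ) / n * (xiCount sgs.1 v - (n : ℝ) / Q)|
        ≤ del * xiCount sg0.1 u := by
      rw [abs_mul, abs_of_pos (div_pos (hm0 u) hn')]
      calc _ ≤ (xiCount sg0.1 u : ℝ) / n * (del * n) :=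
            mul_le_mul_of_nonneg_left hY (div_pos (hm0 u) hn').le
        _ = _ := by field_simp
    have := abs_sub ((ximat sg0.1 sgs.1 u v : ℝ) - (xiCount sg0.1 u : ℝ) / Q)
      ((xiCount sg0.1 u : ℝ) / n * (xiCount sgs.1 v - (n : ℝ) / Q))
    have := hZ u
    have := mul_le_mul_of_nonneg_left (hm u) hdel.le
    linarith

/-- If all statistics are below their levels, each entry of the normalized load matrix is within
`5 * del` of `1/Q`, and `del ≤ √del`. -/
lemma near_of_level {Q kap n : ℕ} (hQ : 2 ≤ Q) (hn : 0 < n) (del : ℝ) (hdel : 0 < del)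
    (hdel1 : del ≤ 1) (sg0 sg : ConfigState Q kap n)
    (hm : ∀ u, (n : ℝ) / (2 * Q) ≤ xiCount sg0.1 u)
    (h : ∀ o v, |linStat (coef sg0.1 o) v sg.1| ≤ level sg0.1 del o) :
    configNearMat Q kap n sg0 sg (5 * Q * Real.sqrt del) := by
  intro u
  have hn' : (0 : ℝ) < n := by exact_mod_cast hn
  have hQ' : (2 : ℝ) ≤ Q := by exact_mod_cast hQ
  have hm0 : (0 : ℝ) < xiCount sg0.1 u := lt_of_lt_of_le (by positivity) (hm u)
  have hent : ∀ v, |(ximat sg0.1 sg.1 u v : ℝ) / (xiCount sg0.1 u : ℝ) - 1 / (Q : ℝ)|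
      ≤ 5 * del := by
    intro v
    have hY := h none v
    have hW := h (some u) v
    have e : (ximat sg0.1 sg.1 u v : ℝ) / (xiCount sg0.1 u : ℝ) - 1 / (Q : ℝ)
        = linStat (coef sg0.1 (some u)) v sg.1 / xiCount sg0.1 u
          + linStat (coef sg0.1 none) v sg.1 / n := by
      rw [linStat_some, linStat_none]
      have := hm0.ne'
      field_simp
      ring
    have h1 : |linStat (coef sg0.1 (some u)) v sg.1 / xiCount sg0.1 u| ≤ 3 * del := by
      rw [abs_div, abs_of_pos hm0, div_le_iff₀ hm0]
      simp only [level] at hW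
      linarith
    have h2 : |linStat (coef sg0.1 none) v sg.1 / n| ≤ 2 * del := by
      rw [abs_div, abs_of_pos hn', div_le_iff₀ hn']
      simp only [level] at hY
      linarith
    rw [e]
    exact (abs_add_le _ _).trans (by linarith)
  have hds : del ≤ Real.sqrt del := Real.le_sqrt_of_sq_le (by nlinarith)
  rw [Real.sqrt_le_left (by positivity)]
  calc _ ≤ ∑ v : Fin Q, (5 * del) ^ 2 :=
        Finset.sum_le_sum fun v _ => by
          rw [← sq_abs]
          exact pow_le_pow_left₀ (abs_nonneg _) (hent v) 2
    _ = Q * (5 * del) ^ 2 := by simp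
    _ ≤ (Q * (5 * del)) ^ 2 := by
        have : 0 ≤ (5 * del) ^ 2 := sq_nonneg _
        nlinarith
    _ ≤ _ := by
        refine pow_le_pow_left₀ (by positivity) ?_ 2
        nlinarith

/-- The exponential rate absorbs the polynomial prefactor coming from the union bound. -/
lemma absorb (c K x : ℝ) (hc : 0 < c) (hK : 0 < K) (hx : 12 * K / c ^ 3 + 1 ≤ x) :
    (x ^ 2 + 1) * (K * Real.exp (-(2 * c) * x)) ≤ Real.exp (-c * x) := by
  have hx1 : 1 ≤ x := by
    have : 0 ≤ 12 * K / c ^ 3 := by positivity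
    linarith
  have h1 : (c * x) ^ 3 / (Nat.factorial 3 : ℝ) ≤ Real.exp (c * x) :=
    Real.pow_div_factorial_le_exp _ (by positivity) 3
  have h2 : 12 * K ≤ x * c ^ 3 := by
    rw [← div_le_iff₀ (by positivity)]
    linarith
  have h3 : (x ^ 2 + 1) * K ≤ Real.exp (c * x) := by
    refine le_trans ?_ h1
    norm_num [Nat.factorial]
    have h4 : x ^ 2 * (12 * K) ≤ x ^ 2 * (x * c ^ 3) :=
      mul_le_mul_of_nonneg_left h2 (sq_nonneg x)
    have h5 : K * 1 ≤ K * x ^ 2 := mul_le_mul_of_nonneg_left (by nlinarith) hK.le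
    rw [le_div_iff₀ (by norm_num)]
    nlinarith
  calc _ = (x ^ 2 + 1) * K * Real.exp (-(2 * c) * x) := by ring
    _ ≤ Real.exp (c * x) * Real.exp (-(2 * c) * x) :=
        mul_le_mul_of_nonneg_right h3 (Real.exp_pos _).le
    _ = _ := by
        rw [← Real.exp_add]
        ring_nf

/-- The sign of the exponent: both tails of each statistic are needed. -/
def sgn : Bool → ℝ
  | true => 1
  | false => -1

lemma sgn_abs (b : Bool) : |sgn b| = 1 := by cases b <;> simp [sgn]


/-- the normalized load matrix stays `cStar sqrt(delta)`-close to
flat up to time `n^2` (Lemma 3.3). -/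
theorem statement10 (Q : Nat) (hQ : 2 ≤ Q) (rho : Real) (hrho0 : 0 < rho) (hrho1 : rho < 1) :
    ∃ cs : Real, 0 < cs ∧
      ∀ del : Real, 0 < del → del < rho / (2 * Q) →
      ∃ cdel ndel : Real, 0 < cdel ∧ 0 < ndel ∧
        ∀ kap : Nat, 0 < kap → ∀ n : Nat, n = ⌊rho * ((kap * Q : Nat) : Real)⌋₊ →
        ndel ≤ (n : Real) →
        ∀ sg0 : ConfigState Q kap n, configNear Q kap n rho sg0 del →
        ∀ sgs : ConfigState Q kap n, configNearMat Q kap n sg0 sgs del →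
          hitProb (configP Q kap n) sgs (n^2)
              (fun sg => ¬ configNearMat Q kap n sg0 sg (cs * Real.sqrt del))
            ≤ Real.exp (-cdel * (n : Real)) := by
  have hQ' : (2 : ℝ) ≤ Q := by exact_mod_cast hQ
  refine ⟨5 * Q, by positivity, fun del hdel hdelQ => ?_⟩
  have hdel1 : del ≤ 1 := by
    refine hdelQ.le.trans ?_
    rw [div_le_one (by positivity)]
    linarith
  set K : ℝ := 2 * Q * (Q + 1) with hK
  have hKpos : 0 < K := by positivity
  set c : ℝ := del ^ 2 / (64 * Q ^ 2) with hc
  have hcpos : 0 < c := by positivity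
  refine ⟨c, 12 * K / c ^ 3 + 1, hcpos, by positivity, ?_⟩
  intro kap hkap n hn hnd sg0 hsg0 sgs hsgs
  have hn1 : (1 : ℝ) ≤ n := by
    have : 0 ≤ 12 * K / c ^ 3 := by positivity
    linarith
  have hn0 : 0 < n := by exact_mod_cast (lt_of_lt_of_le one_pos hn1)
  have hNpos : (0 : ℝ) < ((kap * Q : ℕ) : ℝ) := by
    exact_mod_cast Nat.mul_pos hkap (by omega)
  have hnrho : (n : ℝ) ≤ rho * ((kap * Q : ℕ) : ℝ) := by
    rw [hn]
    exact Nat.floor_le (by positivity)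
  have hnN : n < kap * Q := by
    have : (n : ℝ) < ((kap * Q : ℕ) : ℝ) := by nlinarith
    exact_mod_cast this
  have hm : ∀ u, (n : ℝ) / (2 * Q) ≤ xiCount sg0.1 u := by
    intro u
    have h1 : |(xiCount sg0.1 u : ℝ) / ((kap * Q : ℕ) : ℝ) - rho / (Q : ℝ)| ≤ del := by
      refine le_trans ?_ hsg0
      rw [← Real.sqrt_sq_eq_abs]
      exact Real.sqrt_le_sqrt (Finset.single_le_sum
        (f := fun v => ((xiCount sg0.1 v : ℝ) / ((kap * Q : ℕ) : ℝ) - rho / (Q : ℝ)) ^ 2)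
        (fun _ _ => sq_nonneg _) (Finset.mem_univ u))
    have h2 := (abs_le.1 h1).1
    have h3 : rho / (Q : ℝ) = 2 * (rho / (2 * Q)) := by field_simp
    have h4 : rho / (2 * Q) ≤ (xiCount sg0.1 u : ℝ) / ((kap * Q : ℕ) : ℝ) := by linarith
    rw [le_div_iff₀ hNpos] at h4
    refine le_trans ?_ h4
    rw [div_mul_eq_mul_div]
    exact div_le_div_of_nonneg_right hnrho (by positivity)
  -- The value of `θ` minimizing `-θ * (del / (2 * Q)) + 2 * θ ^ 2`.
  set θ : ℝ := del / (8 * Q) with hθ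
  have hθ0 : 0 < θ := by positivity
  have hθ1 : θ ≤ 1 := by
    rw [hθ, div_le_one (by positivity)]
    linarith
  set e : (Option (Fin Q) × Fin Q) × Bool → ConfigState Q kap n → ℝ := fun j sg =>
    Real.exp (θ * sgn j.2 * linStat (coef sg0.1 j.1.1) j.1.2 sg.1) with he
  set V : ConfigState Q kap n → ℝ := ∑ j, Real.exp (-(θ * level sg0.1 del j.1.1)) • e j with hV
  have hVapp : ∀ sg, V sg = ∑ j, Real.exp (-(θ * level sg0.1 del j.1.1)) * e j sg := by
    intro sg
    simp [hV, Finset.sum_apply]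
  have hterm : ∀ j sg, 0 ≤ Real.exp (-(θ * level sg0.1 del j.1.1)) * e j sg := fun j sg =>
    mul_nonneg (Real.exp_pos _).le (Real.exp_pos _).le
  have hV0 : ∀ sg, 0 ≤ V sg := fun sg => by
    rw [hVapp]
    exact Finset.sum_nonneg fun j _ => hterm j sg
  have hV1 : ∀ sg, ¬ configNearMat Q kap n sg0 sg (5 * Q * Real.sqrt del) → 1 ≤ V sg := by
    intro sg hbad
    by_contra hlt
    apply hbad
    refine near_of_level hQ hn0 del hdel hdel1 sg0 sg hm fun o v => ?_
    have hside : ∀ b, sgn b * linStat (coef sg0.1 o) v sg.1 ≤ level sg0.1 del o := by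
      intro b
      by_contra hgt
      push Not at hgt
      apply hlt
      rw [hVapp]
      refine le_trans ?_ (Finset.single_le_sum (fun j _ => hterm j sg)
        (Finset.mem_univ ((o, v), b)))
      simp only [he]
      rw [← Real.exp_add, Real.one_le_exp_iff]
      nlinarith
    have ht := hside true
    have hf := hside false
    simp only [sgn] at ht hf
    rw [abs_le]
    constructor <;> linarith
  have hrow := configP_row hn0 hnN
  have hmom : ∀ t, (markovOp (configP Q kap n) ^ t) V sgs ≤ K * Real.exp (-(2 * c) * n) := by
    intro t
    rw [hV, map_sum, Finset.sum_apply]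
    calc _ ≤ ∑ j : (Option (Fin Q) × Fin Q) × Bool, Real.exp (-(2 * c) * n) := by
          refine Finset.sum_le_sum fun j _ => ?_
          obtain ⟨⟨o, v⟩, b⟩ := j
          obtain ⟨r, hr0, hr1, hgap, hr⟩ := linStat_eigen (by omega) hn0 hnN sg0.1 o
          have habs : |θ * sgn b| = θ := by rw [abs_mul, sgn_abs, mul_one, abs_of_pos hθ0]
          have h1 := exp_moment (configP Q kap n) configP_nonneg hrow
            (fun sg => linStat (coef sg0.1 o) v sg.1) r (hr v)
            (linStat_inc _ (coef_abs_le hn0 sg0.1 o) v) hr0 hr1 (2 * n) (by positivity) hgap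
            (θ * sgn b) (by rw [habs]; exact hθ1) t sgs
          rw [habs, ← sq_abs (θ * sgn b), habs] at h1
          rw [map_smul, Pi.smul_apply, smul_eq_mul]
          refine (mul_le_mul_of_nonneg_left h1 (Real.exp_pos _).le).trans ?_
          rw [← Real.exp_add]
          apply Real.exp_le_exp.2
          have h2 := mul_le_mul_of_nonneg_left
            (initial_le hQ hn0 del hdel sg0 sgs hm hsgs o v) hθ0.le
          have h3 : -(θ * (del * (n / (2 * Q)))) + θ ^ 2 * (2 * n) = -(2 * c) * n := by
            rw [hθ, hc]
            field_simp
            ring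
          dsimp only
          linarith
      _ = K * Real.exp (-(2 * c) * n) := by
          simp only [Finset.sum_const, Finset.card_univ, Fintype.card_prod, Fintype.card_option,
            Fintype.card_fin, Fintype.card_bool, nsmul_eq_mul]
          push_cast
          rw [hK]
          ring
  calc _ ≤ ∑ t ∈ Finset.range (n ^ 2 + 1), (markovOp (configP Q kap n) ^ t) V sgs :=
        hitProb_le _ configP_nonneg hrow _ V hV0 hV1 _ _
    _ ≤ ∑ t ∈ Finset.range (n ^ 2 + 1), K * Real.exp (-(2 * c) * n) :=
        Finset.sum_le_sum fun t _ => hmom t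
    _ = ((n : ℝ) ^ 2 + 1) * (K * Real.exp (-(2 * c) * n)) := by simp
    _ ≤ _ := absorb c K n hcpos hKpos hnd

end CongestionPaper
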